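/- If K is a regular n-polytope that is (1, n−1)-flat, then no finite chiral (n+1)-polytope has a facet isomorphic to K. -/

import Mathlib

open scoped Classical

/-- An abstract polytope of rank `n`: a partially ordered set with a unique minimal
element (of rank `-1`) and a unique maximal element (of rank `n`), all of whose
maximal chains (flags) have exactly `n + 2` elements, equipped with the induced
rank function, satisfying the diamond condition and strong connectivity. -/
structure AbstractPolytope (n : ℕ) where
  Face : Type
  [instPartialOrder : PartialOrder Face]
  rank : Face → ℤ
  bot : Face
  top : Face
  bot_le : ∀ F : Face, bot ≤ F
  le_top : ∀ F : Face, F ≤ top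
  rank_bot : rank bot = -1
  rank_top : rank top = n
  rank_strictMono : ∀ F G : Face, F < G → rank F < rank G
  flag_card : ∀ Φ : Flag Face, Nat.card Φ = n + 2
  flag_ranks : ∀ (Φ : Flag Face) (j : ℤ), -1 ≤ j → j ≤ (n : ℤ) →
    ∃ F ∈ Φ, rank F = j
  diamond : ∀ F G : Face, F < G → rank G = rank F + 2 →
    Nat.card {H : Face // F < H ∧ H < G} = 2
  strongly_connected : ∀ F G : Face, F < G → rank F + 3 ≤ rank G →
    ∀ H H' : Face, F < H → H < G → F < H' → H' < G →
    Relation.ReflTransGen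
      (fun A B : Face => F < A ∧ A < G ∧ F < B ∧ B < G ∧ (A ≤ B ∨ B ≤ A)) H H'

attribute [instance] AbstractPolytope.instPartialOrder

namespace AbstractPolytope

variable {n : ℕ} (P : AbstractPolytope n)

/-- The number of flags of `P`. -/
noncomputable def numFlags : ℕ := Nat.card (Flag P.Face)

/-- A vertex is a face of rank `0`. -/
def IsVertex (F : P.Face) : Prop := P.rank F = 0

/-- A facet is a face of rank `n - 1`. -/
def IsFacet (F : P.Face) : Prop := P.rank F = (n : ℤ) - 1

/-- The number of vertices of `P`. -/
noncomputable def numVertices : ℕ := Nat.card {F : P.Face // P.IsVertex F}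

/-- The number of facets of `P`. -/
noncomputable def numFacets : ℕ := Nat.card {F : P.Face // P.IsFacet F}

/-- Two faces are incident when they are comparable. -/
def Incident (F G : P.Face) : Prop := F ≤ G ∨ G ≤ F

/-- `P` is `(k, m)`-flat when every face of rank `k` is incident with every face of
rank `m`. -/
def IsKMFlat (k m : ℤ) : Prop :=
  ∀ F G : P.Face, P.rank F = k → P.rank G = m → P.Incident F G

/-- `P` is flat when every vertex is incident with every facet. -/
def IsFlat : Prop := P.IsKMFlat 0 ((n : ℤ) - 1)

/-- Two flags are adjacent when they differ in exactly one element. -/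
def AdjacentFlags (Φ Ψ : Flag P.Face) : Prop :=
  Φ ≠ Ψ ∧ ((Φ : Set P.Face) \ (Ψ : Set P.Face)).ncard = 1 ∧
    ((Ψ : Set P.Face) \ (Φ : Set P.Face)).ncard = 1

/-- Two flags lie in the same orbit of the automorphism group `Γ(P)` (the group of
order automorphisms of `P`). -/
def SameOrbit (Φ Ψ : Flag P.Face) : Prop :=
  ∃ f : P.Face ≃o P.Face, f '' (Φ : Set P.Face) = (Ψ : Set P.Face)

/-- `P` is regular when `Γ(P)` is transitive on flags. -/
def IsRegular : Prop := ∀ Φ Ψ : Flag P.Face, P.SameOrbit Φ Ψ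

/-- `P` is chiral when its flags fall into exactly two orbits under `Γ(P)` and
adjacent flags always lie in different orbits. -/
def IsChiral : Prop :=
  (∃ Φ₁ Φ₂ : Flag P.Face, ¬ P.SameOrbit Φ₁ Φ₂ ∧
      ∀ Φ : Flag P.Face, P.SameOrbit Φ Φ₁ ∨ P.SameOrbit Φ Φ₂) ∧
  ∀ Φ Ψ : Flag P.Face, P.AdjacentFlags Φ Ψ → ¬ P.SameOrbit Φ Ψ

/-- The polytope `Q` is (isomorphic to) the section `G/F` of `P`: there is an order
isomorphism from `Q` onto the interval `[F, G]` of `P`, shifting ranks by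
`rank F + 1`. -/
def IsSection {m : ℕ} (Q : AbstractPolytope m) (F G : P.Face) : Prop :=
  F ≤ G ∧ ∃ e : Q.Face ≃o (Set.Icc F G),
    ∀ x : Q.Face, P.rank (e x : P.Face) = Q.rank x + P.rank F + 1

/-- `P` is equivelar of Schläfli type `{p 1, …, p (n-1)}`: every section between a
face of rank `i - 2` and a face of rank `i + 1` is a polygon with exactly `p i`
vertices (i.e. it contains exactly `p i` faces of rank `i - 1`). -/
def IsSchlafli (p : ℕ → ℕ) : Prop :=
  ∀ i : ℕ, 1 ≤ i → i ≤ n - 1 →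
    ∀ F G : P.Face, F < G → P.rank F = (i : ℤ) - 2 → P.rank G = (i : ℤ) + 1 →
      Nat.card {H : P.Face // F < H ∧ H < G ∧ P.rank H = (i : ℤ) - 1} = p i

/-- `P` is tight of type `{p 1, …, p (n-1)}`: it is equivelar of that type and has
exactly `2 p₁ ⋯ p_{n-1}` flags. -/
def IsTight (p : ℕ → ℕ) : Prop :=
  P.IsSchlafli p ∧ P.numFlags = 2 * ∏ i ∈ Finset.Icc 1 (n - 1), p i

end AbstractPolytope

namespace AbstractPolytope

section basics

variable {N : ℕ} (P : AbstractPolytope N)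

theorem rank_mono {a b : P.Face} (h : a ≤ b) : P.rank a ≤ P.rank b := by
  rcases eq_or_lt_of_le h with rfl | h
  · exact le_rfl
  · exact (P.rank_strictMono _ _ h).le

theorem eq_of_le_of_rank {a b : P.Face} (h : a ≤ b) (hr : P.rank b ≤ P.rank a) : a = b := by
  rcases eq_or_lt_of_le h with rfl | h
  · rfl
  · have := P.rank_strictMono _ _ h
    omega

theorem rank_ge (a : P.Face) : -1 ≤ P.rank a := by
  have := P.rank_mono (P.bot_le a)
  rwa [P.rank_bot] at this

theorem rank_le (a : P.Face) : P.rank a ≤ N := by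
  have := P.rank_mono (P.le_top a)
  rwa [P.rank_top] at this

theorem flag_lt {Φ : Flag P.Face} {a b : P.Face} (ha : a ∈ Φ) (hb : b ∈ Φ)
    (h : P.rank a < P.rank b) : a < b := by
  rcases Φ.le_or_le ha hb with h1 | h1
  · exact lt_of_le_of_ne h1 (by rintro rfl; omega)
  · have := P.rank_mono h1
    omega

theorem flag_eq {Φ : Flag P.Face} {a b : P.Face} (ha : a ∈ Φ) (hb : b ∈ Φ)
    (h : P.rank a = P.rank b) : a = b := by
  rcases Φ.le_or_le ha hb with h1 | h1
  · exact P.eq_of_le_of_rank h1 h.ge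
  · exact (P.eq_of_le_of_rank h1 h.le).symm

theorem flag_le {Φ : Flag P.Face} {a b : P.Face} (ha : a ∈ Φ) (hb : b ∈ Φ)
    (h : P.rank a ≤ P.rank b) : a ≤ b := by
  rcases h.lt_or_eq with h | h
  · exact (P.flag_lt ha hb h).le
  · exact (P.flag_eq ha hb h).le

theorem bot_mem (Φ : Flag P.Face) : P.bot ∈ Φ :=
  Flag.mem_iff_forall_le_or_ge.2 fun b _ => Or.inl (P.bot_le b)

theorem top_mem (Φ : Flag P.Face) : P.top ∈ Φ :=
  Flag.mem_iff_forall_le_or_ge.2 fun b _ => Or.inr (P.le_top b)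

theorem exists_flag3 {a b c : P.Face} (h1 : a ≤ b) (h2 : b ≤ c) :
    ∃ Φ : Flag P.Face, a ∈ Φ ∧ b ∈ Φ ∧ c ∈ Φ := by
  have hc : IsChain (· ≤ ·) ({a, b, c} : Set P.Face) := by
    intro x hx y hy _
    simp only [Set.mem_insert_iff, Set.mem_singleton_iff] at hx hy
    have h3 := h1.trans h2
    rcases hx with rfl | rfl | rfl <;> rcases hy with rfl | rfl | rfl <;> simp [*]
  obtain ⟨Φ, h⟩ := hc.exists_subset_flag
  exact ⟨Φ, h (by simp), h (by simp), h (by simp)⟩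

theorem lt_of_rank {a b : P.Face} (h : a ≤ b) (hr : P.rank a < P.rank b) : a < b :=
  lt_of_le_of_ne h (by rintro rfl; omega)

/-- any face below `b` at an intermediate rank -/
theorem exists_between {a b : P.Face} (h : a ≤ b) (j : ℤ) (h1 : P.rank a ≤ j)
    (h2 : j ≤ P.rank b) : ∃ c, a ≤ c ∧ c ≤ b ∧ P.rank c = j := by
  obtain ⟨Φ, ha, hb, -⟩ := P.exists_flag3 h le_rfl
  obtain ⟨c, hc, hr⟩ := P.flag_ranks Φ j (by have := P.rank_ge a; omega)
    (by have := P.rank_le b; omega)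
  exact ⟨c, P.flag_le ha hc (by omega), P.flag_le hc hb (by omega), hr⟩

/-- The diamond condition in usable form. -/
theorem diamond_unique {a b x y z : P.Face} (hr : P.rank b = P.rank a + 2)
    (hx : a < x ∧ x < b) (hy : a < y ∧ y < b) (hz : a < z ∧ z < b)
    (hxy : x ≠ y) (hxz : x ≠ z) : y = z := by
  have h := P.diamond a b (hx.1.trans hx.2) hr
  rw [Nat.card_eq_two_iff] at h
  obtain ⟨p, q, hpq, hu⟩ := h
  have key : ∀ w : {H : P.Face // a < H ∧ H < b}, w = p ∨ w = q := by
    intro w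
    have : w ∈ ({p, q} : Set _) := hu ▸ Set.mem_univ w
    simpa using this
  have a1 := key ⟨x, hx⟩
  have a2 := key ⟨y, hy⟩
  have a3 := key ⟨z, hz⟩
  have e1 : (⟨x, hx⟩ : {H : P.Face // a < H ∧ H < b}) ≠ ⟨y, hy⟩ := by simpa using hxy
  have e2 : (⟨x, hx⟩ : {H : P.Face // a < H ∧ H < b}) ≠ ⟨z, hz⟩ := by simpa using hxz
  have : (⟨y, hy⟩ : {H : P.Face // a < H ∧ H < b}) = ⟨z, hz⟩ := by
    rcases a1 with a1 | a1 <;> rcases a2 with a2 | a2 <;> rcases a3 with a3 | a3 <;> simp_all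
  simpa using this

theorem diamond_other {a b x : P.Face} (hr : P.rank b = P.rank a + 2)
    (hx : a < x ∧ x < b) : ∃ y, y ≠ x ∧ a < y ∧ y < b := by
  have h := P.diamond a b (hx.1.trans hx.2) hr
  rw [Nat.card_eq_two_iff' ⟨x, hx⟩] at h
  obtain ⟨y, hy, -⟩ := h
  exact ⟨y.1, fun h => hy (Subtype.ext h), y.2⟩

/-- Rigidity: a map of an interval fixing a flag of the interval is the identity there. -/
theorem rigid (d : ℕ) : ∀ (A B : P.Face) (g : P.Face → P.Face), A ≤ B →
    P.rank B ≤ P.rank A + d →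
    MonotoneOn g (Set.Icc A B) → Set.InjOn g (Set.Icc A B) →
    ∀ Φ : Flag P.Face, A ∈ Φ → B ∈ Φ → (∀ x ∈ Φ, A ≤ x → x ≤ B → g x = x) →
    ∀ x, A ≤ x → x ≤ B → g x = x := by
  induction d with
  | zero =>
    intro A B g hAB hr hm hi Φ hA hB hfix x hx1 hx2
    have : A = B := P.eq_of_le_of_rank hAB (by simpa using hr)
    subst this
    have : A = x := le_antisymm hx1 hx2
    subst this
    exact hfix _ hA le_rfl le_rfl
  | succ d ih =>
    intro A B g hAB hr hm hi Φ hA hB hfix x hx1 hx2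
    have gA := hfix A hA le_rfl hAB
    have gB := hfix B hB hAB le_rfl
    rcases eq_or_lt_of_le hx1 with rfl | hx1
    · exact gA
    rcases eq_or_lt_of_le hx2 with rfl | hx2
    · exact gB
    have r1 := P.rank_strictMono _ _ hx1
    have r2 := P.rank_strictMono _ _ hx2
    obtain ⟨H, hH, hHr⟩ := P.flag_ranks Φ (P.rank A + 1) (by have := P.rank_ge A; omega)
      (by have := P.rank_le B; omega)
    have hAH : A < H := P.flag_lt hA hH (by omega)
    have hHB : H < B := P.flag_lt hH hB (by omega)
    have gH := hfix H hH hAH.le hHB.le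
    by_cases h3 : P.rank A + 3 ≤ P.rank B
    · have good : ∀ K : P.Face,
          Relation.ReflTransGen (fun X Y : P.Face =>
            A < X ∧ X < B ∧ A < Y ∧ Y < B ∧ (X ≤ Y ∨ Y ≤ X)) H K →
          A < K ∧ K < B ∧ (∀ z, A ≤ z → z ≤ K → g z = z) ∧
            (∀ z, K ≤ z → z ≤ B → g z = z) := by
        intro K hK
        induction hK with
        | refl =>
          refine ⟨hAH, hHB, ?_, ?_⟩
          · exact ih A H g hAH.le (by push_cast at hr; omega)
              (hm.mono (Set.Icc_subset_Icc_right hHB.le))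
              (hi.mono (Set.Icc_subset_Icc_right hHB.le)) Φ hA hH
              (fun z hz h1 h2 => hfix z hz h1 (h2.trans hHB.le))
          · exact ih H B g hHB.le (by push_cast at hr; omega)
              (hm.mono (Set.Icc_subset_Icc_left hAH.le))
              (hi.mono (Set.Icc_subset_Icc_left hAH.le)) Φ hH hB
              (fun z hz h1 h2 => hfix z hz (hAH.le.trans h1) h2)
        | tail _ hstep IH =>
          rename_i X Y _
          obtain ⟨hX1, hX2, hY1, hY2, hc⟩ := hstep
          obtain ⟨-, -, i1, i2⟩ := IH
          have rY1 := P.rank_strictMono _ _ hY1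
          have rY2 := P.rank_strictMono _ _ hY2
          refine ⟨hY1, hY2, ?_, ?_⟩
          · rcases hc with hc | hc
            · obtain ⟨Ψ, p1, p2, p3⟩ := P.exists_flag3 hX1.le hc
              refine ih A Y g hY1.le (by push_cast at hr; omega)
                (hm.mono (Set.Icc_subset_Icc_right hY2.le))
                (hi.mono (Set.Icc_subset_Icc_right hY2.le)) Ψ p1 p3 ?_
              intro z hz h1 h2
              rcases Ψ.le_or_le hz p2 with h | h
              · exact i1 z h1 h
              · exact i2 z h (h2.trans hY2.le)
            · exact fun z h1 h2 => i1 z h1 (h2.trans hc)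
          · rcases hc with hc | hc
            · exact fun z h1 h2 => i2 z (hc.trans h1) h2
            · obtain ⟨Ψ, p1, p2, p3⟩ := P.exists_flag3 hc hX2.le
              refine ih Y B g hY2.le (by push_cast at hr; omega)
                (hm.mono (Set.Icc_subset_Icc_left hY1.le))
                (hi.mono (Set.Icc_subset_Icc_left hY1.le)) Ψ p1 p3 ?_
              intro z hz h1 h2
              rcases Ψ.le_or_le hz p2 with h | h
              · exact i1 z (hY1.le.trans h1) h
              · exact i2 z h h2
      exact (good x (P.strongly_connected A B (hAH.trans hHB) h3 H x hAH hHB hx1 hx2)).2.2.1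
        x hx1.le le_rfl
    · by_cases hxH : H = x
      · subst hxH; exact gH
      have mA : A ∈ Set.Icc A B := ⟨le_rfl, hAB⟩
      have mB : B ∈ Set.Icc A B := ⟨hAB, le_rfl⟩
      have mH : H ∈ Set.Icc A B := ⟨hAH.le, hHB.le⟩
      have mx : x ∈ Set.Icc A B := ⟨hx1.le, hx2.le⟩
      have g1 : A ≤ g x := by simpa [gA] using hm mA mx hx1.le
      have g2 : g x ≤ B := by simpa [gB] using hm mx mB hx2.le
      refine (P.diamond_unique (a := A) (b := B) (x := H) (by omega) ⟨hAH, hHB⟩ ⟨hx1, hx2⟩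
        ⟨lt_of_le_of_ne g1 ?_, lt_of_le_of_ne g2 ?_⟩ hxH ?_).symm
      · intro h; exact hx1.ne (hi mA mx (gA.trans h))
      · intro h; exact hx2.ne (hi mx mB (h.trans gB.symm))
      · intro h; exact hxH (hi mH mx (gH.trans h))

theorem rigid' (A B : P.Face) (g : P.Face → P.Face) (hAB : A ≤ B)
    (hm : MonotoneOn g (Set.Icc A B)) (hi : Set.InjOn g (Set.Icc A B))
    (Φ : Flag P.Face) (hA : A ∈ Φ) (hB : B ∈ Φ)
    (hfix : ∀ x ∈ Φ, A ≤ x → x ≤ B → g x = x) :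
    ∀ x, A ≤ x → x ≤ B → g x = x :=
  P.rigid (P.rank B - P.rank A).toNat A B g hAB (by have := P.rank_mono hAB; omega) hm hi Φ
    hA hB hfix

theorem rank_aut_le (f : P.Face ≃o P.Face) (d : ℕ) :
    ∀ x, P.rank x = (d : ℤ) - 1 → P.rank x ≤ P.rank (f x) := by
  induction d with
  | zero =>
    intro x hx
    have := P.rank_ge (f x)
    simp at hx
    omega
  | succ d ih =>
    intro x hx
    obtain ⟨c, h1, h2, h3⟩ := P.exists_between (P.bot_le x) ((d : ℤ) - 1)
      (by rw [P.rank_bot]; omega) (by push_cast at hx; omega)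
    have := ih c h3
    have h4 : c < x := P.lt_of_rank h2 (by push_cast at hx; omega)
    have := P.rank_strictMono _ _ (f.strictMono h4)
    push_cast at hx
    omega

theorem rank_aut (f : P.Face ≃o P.Face) (x : P.Face) : P.rank (f x) = P.rank x := by
  have key : ∀ (f : P.Face ≃o P.Face) x, P.rank x ≤ P.rank (f x) := fun f x =>
    P.rank_aut_le f (P.rank x + 1).toNat x (by have := P.rank_ge x; omega)
  have h1 := key f x
  have h2 := key f.symm (f x)
  simp at h2
  omega

/-- Replace one face in a flag. -/
theorem exists_replace (Φ : Flag P.Face) {x y : P.Face} (hx : x ∈ Φ) (hxy : y ≠ x)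
    (hr : P.rank y = P.rank x) (hc : ∀ z ∈ Φ, z ≠ x → z ≤ y ∨ y ≤ z) :
    ∃ Ψ : Flag P.Face, P.AdjacentFlags Φ Ψ ∧ ∀ z, z ∈ Ψ ↔ z = y ∨ (z ∈ Φ ∧ z ≠ x) := by
  have hch : IsChain (· ≤ ·) (insert y {z | z ∈ Φ ∧ z ≠ x}) := by
    apply IsChain.insert
    · exact Φ.chain_le.mono (fun z hz => hz.1)
    · intro b hb _
      exact (hc b hb.1 hb.2).symm
  obtain ⟨Ψ, hΨ⟩ := hch.exists_subset_flag
  have hyΨ : y ∈ Ψ := hΨ (by simp)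
  have hm : ∀ z, z ∈ Ψ ↔ z = y ∨ (z ∈ Φ ∧ z ≠ x) := by
    intro z
    constructor
    · intro hz
      by_cases hrz : P.rank z = P.rank x
      · left; exact P.flag_eq hz hyΨ (by omega)
      · obtain ⟨w, hw, hwr⟩ := P.flag_ranks Φ (P.rank z) (P.rank_ge z) (P.rank_le z)
        have hwx : w ≠ x := by rintro rfl; omega
        have : w ∈ Ψ := hΨ (Or.inr ⟨hw, hwx⟩)
        have := P.flag_eq this hz hwr
        subst this
        exact Or.inr ⟨hw, hwx⟩
    · intro hz
      exact hΨ hz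
  have hyΦ : y ∉ Φ := fun h => hxy (P.flag_eq h hx hr)
  have hxΨ : x ∉ Ψ := fun h => by
    rcases (hm x).1 h with h | h
    · exact hxy h.symm
    · exact h.2 rfl
  refine ⟨Ψ, ⟨?_, ?_, ?_⟩, hm⟩
  · rintro rfl; exact hxΨ hx
  · rw [Set.ncard_eq_one]
    refine ⟨x, ?_⟩
    ext z
    simp only [Set.mem_sdiff, SetLike.mem_coe, Set.mem_singleton_iff]
    constructor
    · rintro ⟨h1, h2⟩
      by_contra h
      exact h2 ((hm z).2 (Or.inr ⟨h1, h⟩))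
    · rintro rfl; exact ⟨hx, hxΨ⟩
  · rw [Set.ncard_eq_one]
    refine ⟨y, ?_⟩
    ext z
    simp only [Set.mem_sdiff, SetLike.mem_coe, Set.mem_singleton_iff]
    constructor
    · rintro ⟨h1, h2⟩
      rcases (hm z).1 h1 with h | h
      · exact h
      · exact absurd h.1 h2
    · rintro rfl; exact ⟨hyΨ, hyΦ⟩

/-- The `i`-adjacent flag exists. -/
theorem exists_adj (Φ : Flag P.Face) {a x b : P.Face} (ha : a ∈ Φ) (hx : x ∈ Φ) (hb : b ∈ Φ)
    (h1 : P.rank x = P.rank a + 1) (h2 : P.rank b = P.rank x + 1) {y : P.Face}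
    (hy : y ≠ x) (hay : a < y) (hyb : y < b) :
    ∃ Ψ : Flag P.Face, P.AdjacentFlags Φ Ψ ∧ ∀ z, z ∈ Ψ ↔ z = y ∨ (z ∈ Φ ∧ z ≠ x) := by
  have r1 := P.rank_strictMono _ _ hay
  have r2 := P.rank_strictMono _ _ hyb
  refine P.exists_replace Φ hx hy (by omega) ?_
  intro z hz hzx
  rcases lt_trichotomy (P.rank z) (P.rank x) with h | h | h
  · exact Or.inl ((P.flag_le hz ha (by omega)).trans hay.le)
  · exact absurd (P.flag_eq hz hx h) hzx
  · exact Or.inr (hyb.le.trans (P.flag_le hb hz (by omega)))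

/-- An automorphism performing the replacement maps one flag to the other. -/
theorem sameOrbit_of_replace {Φ Ψ : Flag P.Face} {x y : P.Face} (hx : x ∈ Φ)
    (hm : ∀ z, z ∈ Ψ ↔ z = y ∨ (z ∈ Φ ∧ z ≠ x)) (f : P.Face ≃o P.Face) (hxy : f x = y)
    (hf : ∀ z ∈ Φ, z ≠ x → f z = z) : P.SameOrbit Φ Ψ := by
  refine ⟨f, ?_⟩
  ext z
  simp only [Set.mem_image, SetLike.mem_coe]
  constructor
  · rintro ⟨w, hw, rfl⟩
    by_cases h : w = x
    · subst h; exact (hm _).2 (Or.inl hxy)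
    · rw [hf w hw h]; exact (hm _).2 (Or.inr ⟨hw, h⟩)
  · intro hz
    rcases (hm z).1 hz with rfl | ⟨h1, h2⟩
    · exact ⟨x, hx, hxy⟩
    · exact ⟨z, h1, hf z h1 h2⟩

theorem SameOrbit.symm' {Φ Ψ : Flag P.Face} (h : P.SameOrbit Φ Ψ) : P.SameOrbit Ψ Φ := by
  obtain ⟨f, hf⟩ := h
  exact ⟨f.symm, by rw [← hf, f.symm_image_image]⟩

theorem SameOrbit.trans' {Φ Ψ Χ : Flag P.Face} (h : P.SameOrbit Φ Ψ) (h' : P.SameOrbit Ψ Χ) :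
    P.SameOrbit Φ Χ := by
  obtain ⟨f, hf⟩ := h
  obtain ⟨g, hg⟩ := h'
  refine ⟨f.trans g, ?_⟩
  rw [← hg, ← hf, Set.image_image]
  rfl

theorem chiral_two (h : P.IsChiral) (A B C : Flag P.Face) :
    P.SameOrbit A B ∨ P.SameOrbit A C ∨ P.SameOrbit B C := by
  obtain ⟨⟨Φ₁, Φ₂, -, hc⟩, -⟩ := h
  have s : ∀ {X Y : Flag P.Face}, P.SameOrbit X Y → P.SameOrbit Y X := fun h => h.symm'
  rcases hc A with a | a <;> rcases hc B with b | b <;> rcases hc C with c | c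
  · exact Or.inl (SameOrbit.trans' P a (s b))
  · exact Or.inl (SameOrbit.trans' P a (s b))
  · exact Or.inr (Or.inl (SameOrbit.trans' P a (s c)))
  · exact Or.inr (Or.inr (SameOrbit.trans' P b (s c)))
  · exact Or.inr (Or.inr (SameOrbit.trans' P b (s c)))
  · exact Or.inr (Or.inl (SameOrbit.trans' P a (s c)))
  · exact Or.inl (SameOrbit.trans' P a (s b))
  · exact Or.inl (SameOrbit.trans' P a (s b))

/-- elements map to the elements of the same rank under a flag map -/
theorem map_flag_elem {Φ Ψ : Flag P.Face} {f : P.Face ≃o P.Face}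
    (hf : f '' (Φ : Set P.Face) = (Ψ : Set P.Face)) {x y : P.Face} (hx : x ∈ Φ) (hy : y ∈ Ψ)
    (hr : P.rank x = P.rank y) : f x = y := by
  have : f x ∈ (Ψ : Set P.Face) := hf ▸ Set.mem_image_of_mem f hx
  exact P.flag_eq this hy (by rw [P.rank_aut, hr])

end basics

section small

variable {N : ℕ} (P : AbstractPolytope N)

/-- An involutive monotone map is an order automorphism. -/
def involIso (f : P.Face → P.Face) (hi : ∀ x, f (f x) = x) (hm : Monotone f) :
    P.Face ≃o P.Face where
  toFun := f
  invFun := f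
  left_inv := hi
  right_inv := hi
  map_rel_iff' := by
    intro a b
    refine ⟨fun h => ?_, fun h => hm h⟩
    have := hm h
    simpa [hi] using this

theorem eq_bot_of_rank {x : P.Face} (h : P.rank x = -1) : x = P.bot :=
  (P.eq_of_le_of_rank (P.bot_le x) (by rw [P.rank_bot, h])).symm

theorem eq_top_of_rank {x : P.Face} (h : P.rank x = N) : x = P.top :=
  P.eq_of_le_of_rank (P.le_top x) (by rw [P.rank_top, h])

end small

theorem not_chiral_one (P : AbstractPolytope 1) : ¬ P.IsChiral := by
  intro hc
  obtain ⟨⟨Φ, -⟩, hadj⟩ := hc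
  obtain ⟨v, hv, hvr⟩ := P.flag_ranks Φ 0 (by norm_num) (by norm_num)
  have rb := P.rank_bot
  have rt := P.rank_top
  push_cast at rt
  have hv1 : P.bot < v := P.lt_of_rank (P.bot_le v) (by omega)
  have hv2 : v < P.top := P.lt_of_rank (P.le_top v) (by omega)
  obtain ⟨y, hy, hy1, hy2⟩ := P.diamond_other (by omega) ⟨hv1, hv2⟩
  obtain ⟨Ψ, hΨ, hm⟩ := P.exists_adj Φ (P.bot_mem Φ) hv (P.top_mem Φ) (by omega) (by omega)
    hy hy1 hy2
  have hcases : ∀ x, x = P.bot ∨ x = P.top ∨ x = v ∨ x = y := by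
    intro x
    by_cases h1 : x = P.bot
    · exact Or.inl h1
    by_cases h2 : x = P.top
    · exact Or.inr (Or.inl h2)
    by_cases h3 : x = v
    · exact Or.inr (Or.inr (Or.inl h3))
    refine Or.inr (Or.inr (Or.inr ?_))
    exact P.diamond_unique (by omega) ⟨hv1, hv2⟩
      ⟨lt_of_le_of_ne (P.bot_le x) (Ne.symm h1), lt_of_le_of_ne (P.le_top x) h2⟩
      ⟨hy1, hy2⟩ (Ne.symm h3) hy.symm
  have fb : Equiv.swap v y P.bot = P.bot := Equiv.swap_apply_of_ne_of_ne hv1.ne hy1.ne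
  have ft : Equiv.swap v y P.top = P.top := Equiv.swap_apply_of_ne_of_ne hv2.ne' hy2.ne'
  have hmono : Monotone (Equiv.swap v y) := by
    intro a b hab
    rcases eq_or_lt_of_le hab with rfl | hlt
    · exact le_rfl
    by_cases ha : a = P.bot
    · rw [ha, fb]; exact P.bot_le _
    by_cases hb : b = P.top
    · rw [hb, ft]; exact P.le_top _
    exfalso
    have h1 := P.rank_strictMono _ _ hlt
    have h2 := P.rank_strictMono _ _ (lt_of_le_of_ne (P.bot_le a) (Ne.symm ha))
    have h3 := P.rank_strictMono _ _ (lt_of_le_of_ne (P.le_top b) hb)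
    omega
  refine hadj Φ Ψ hΨ (P.sameOrbit_of_replace hv hm
    (P.involIso (Equiv.swap v y) (Equiv.swap_apply_self v y) hmono)
    (Equiv.swap_apply_left v y) ?_)
  intro z hz hzv
  refine Equiv.swap_apply_of_ne_of_ne hzv ?_
  rintro rfl
  have h1 := P.rank_strictMono _ _ hy1
  have h2 := P.rank_strictMono _ _ hy2
  exact hzv (P.flag_eq hz hv (by omega))

theorem not_chiral_two (P : AbstractPolytope 2) : ¬ P.IsChiral := by
  intro hc
  have htwo := P.chiral_two hc
  obtain ⟨⟨Φ, -⟩, hadj⟩ := hc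
  obtain ⟨v, hv, hvr⟩ := P.flag_ranks Φ 0 (by norm_num) (by norm_num)
  obtain ⟨e, he, her⟩ := P.flag_ranks Φ 1 (by norm_num) (by norm_num)
  have rb := P.rank_bot
  have rt := P.rank_top
  push_cast at rt
  have hv1 : P.bot < v := P.lt_of_rank (P.bot_le v) (by omega)
  have hve : v < e := P.flag_lt hv he (by omega)
  have he2 : e < P.top := P.lt_of_rank (P.le_top e) (by omega)
  obtain ⟨y, hy, hy1, hy2⟩ := P.diamond_other (by omega) ⟨hv1, hve⟩
  have hyr : P.rank y = 0 := by
    have h1 := P.rank_strictMono _ _ hy1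
    have h2 := P.rank_strictMono _ _ hy2
    omega
  obtain ⟨Ψ, hΨ, hm⟩ := P.exists_adj Φ (P.bot_mem Φ) hv he (by omega) (by omega)
    hy hy1 hy2
  have yΨ : y ∈ Ψ := (hm y).2 (Or.inl rfl)
  have eΨ : e ∈ Ψ := (hm e).2 (Or.inr ⟨he, hve.ne'⟩)
  obtain ⟨e', he', hye', he'2⟩ := P.diamond_other (a := y) (b := P.top) (by omega) ⟨hy2, he2⟩
  have her' : P.rank e' = 1 := by
    have h1 := P.rank_strictMono _ _ hye'
    have h2 := P.rank_strictMono _ _ he'2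
    omega
  obtain ⟨Χ, hΧ, hm'⟩ := P.exists_adj Ψ yΨ eΨ (P.top_mem Ψ) (by omega) (by omega)
    he' hye' he'2
  have yΧ : y ∈ Χ := (hm' y).2 (Or.inr ⟨yΨ, hy2.ne⟩)
  have eΧ : e' ∈ Χ := (hm' e').2 (Or.inl rfl)
  have horb : P.SameOrbit Φ Χ := by
    rcases htwo Φ Ψ Χ with h | h | h
    · exact absurd h (hadj _ _ hΨ)
    · exact h
    · exact absurd h (hadj _ _ hΧ)
  obtain ⟨s, hs⟩ := horb
  have sv : s v = y := P.map_flag_elem hs hv yΧ (by omega)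
  have se : s e = e' := P.map_flag_elem hs he eΧ (by omega)
  have add : ∀ (i j : ℤ) (x : P.Face), (s ^ (i + j)) x = (s ^ i) ((s ^ j) x) := by
    intro i j x
    rw [zpow_add]; rfl
  have z0 : ∀ x : P.Face, (s ^ (0 : ℤ)) x = x := fun x => by rw [zpow_zero]; rfl
  have z1 : ∀ x : P.Face, (s ^ (1 : ℤ)) x = s x := fun x => by rw [zpow_one]
  have rk : ∀ (i : ℤ) x, P.rank ((s ^ i) x) = P.rank x := fun i x => P.rank_aut _ x
  -- transport of equalities
  have shift : ∀ (i j k : ℤ) (x : P.Face), (s ^ i) x = (s ^ j) x →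
      (s ^ (k + i)) x = (s ^ (k + j)) x := by
    intro i j k x h
    rw [add, add, h]
  have lts : ∀ (i j k : ℤ) (x z : P.Face), (s ^ i) x < (s ^ j) z →
      (s ^ (k + i)) x < (s ^ (k + j)) z := by
    intro i j k x z h
    rw [add, add]
    exact (s ^ k).strictMono h
  have ends : ∀ x, P.bot < x → x < e → x = v ∨ x = y := by
    intro x h1 h2
    by_cases h : x = v
    · exact Or.inl h
    · exact Or.inr (P.diamond_unique (by omega) ⟨hv1, hve⟩ ⟨h1, h2⟩ ⟨hy1, hy2⟩
        (Ne.symm h) hy.symm)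
  have edges : ∀ x, v < x → x < P.top → x = e ∨ x = (s ^ (-1 : ℤ)) e := by
    intro x h1 h2
    by_cases h : x = e
    · exact Or.inl h
    · refine Or.inr (P.diamond_unique (a := v) (b := P.top) (by omega) ⟨hve, he2⟩ ⟨h1, h2⟩
        ⟨?_, ?_⟩ (Ne.symm h) ?_)
      · have h3 := lts 1 0 (-1) v e (by rw [z1, z0, sv]; exact hy2)
        simpa [z0] using h3
      · exact P.lt_of_rank (P.le_top _) (by rw [rk]; omega)
      · intro h3
        apply he'
        rw [← se, ← z1]
        nth_rewrite 1 [h3]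
        rw [← add]
        simp [z0]
  have cover : ∀ x, P.bot < x → x < P.top → (∃ i : ℤ, x = (s ^ i) v) ∨ ∃ i : ℤ, x = (s ^ i) e := by
    intro x h1 h2
    have path := P.strongly_connected P.bot P.top (hv1.trans (hve.trans he2)) (by omega)
      v x hv1 (hve.trans he2) h1 h2
    clear h1 h2
    induction path with
    | refl => exact Or.inl ⟨0, (z0 v).symm⟩
    | tail _ hstep ih =>
      rename_i X Y _
      obtain ⟨hX1, hX2, hY1, hY2, hcomp⟩ := hstep
      by_cases hXY : X = Y
      · subst hXY; exact ih
      have rY1 := P.rank_strictMono _ _ hY1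
      have rY2 := P.rank_strictMono _ _ hY2
      rcases ih with ⟨i, rfl⟩ | ⟨i, rfl⟩
      · rcases hcomp with h | h
        · have h := lt_of_le_of_ne h hXY
          have h3 := lts i 0 (-i) v Y (by rwa [z0])
          simp only [neg_add_cancel, z0, add_zero] at h3
          right
          rcases edges _ h3 (P.lt_of_rank (P.le_top _) (by rw [rk]; omega)) with h4 | h4
          · refine ⟨i, ?_⟩
            rw [← h4, ← add]; simp [z0]
          · refine ⟨i + -1, ?_⟩
            rw [add, ← h4, ← add]; simp [z0]
        · have h := P.rank_strictMono _ _ (lt_of_le_of_ne h (Ne.symm hXY))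
          rw [rk] at h
          omega
      · rcases hcomp with h | h
        · have h := P.rank_strictMono _ _ (lt_of_le_of_ne h hXY)
          rw [rk] at h
          omega
        · have h := lt_of_le_of_ne h (Ne.symm hXY)
          have h3 := lts 0 i (-i) Y e (by rwa [z0])
          simp only [neg_add_cancel, z0, add_zero] at h3
          left
          rcases ends _ (P.lt_of_rank (P.bot_le _) (by rw [rk]; omega)) h3 with h4 | h4
          · refine ⟨i, ?_⟩
            rw [← h4, ← add]; simp [z0]
          · refine ⟨i + 1, ?_⟩
            rw [add, z1, sv, ← h4, ← add]; simp [z0]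
  let f : P.Face → P.Face := fun x =>
    if h : ∃ i : ℤ, x = (s ^ i) v then (s ^ (1 - h.choose)) v
    else if h : ∃ i : ℤ, x = (s ^ i) e then (s ^ (- h.choose)) e else x
  have fv : ∀ i : ℤ, f ((s ^ i) v) = (s ^ (1 - i)) v := by
    intro i
    have h : ∃ j : ℤ, (s ^ i) v = (s ^ j) v := ⟨i, rfl⟩
    have h0 : f ((s ^ i) v) = (s ^ (1 - h.choose)) v := dif_pos h
    rw [h0]
    have h1 := shift _ _ (1 - i - h.choose) v h.choose_spec
    have e1 : 1 - i - h.choose + i = 1 - h.choose := by ring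
    have e2 : 1 - i - h.choose + h.choose = 1 - i := by ring
    rwa [e1, e2] at h1
  have fe : ∀ i : ℤ, f ((s ^ i) e) = (s ^ (-i)) e := by
    intro i
    have hn : ¬ ∃ j : ℤ, (s ^ i) e = (s ^ j) v := by
      rintro ⟨j, hj⟩
      have := congrArg P.rank hj
      rw [rk, rk] at this
      omega
    have h : ∃ j : ℤ, (s ^ i) e = (s ^ j) e := ⟨i, rfl⟩
    have h0 : f ((s ^ i) e) = (s ^ (- h.choose)) e := by
      simp only [f]
      rw [dif_neg hn, dif_pos h]
    rw [h0]
    have h1 := shift _ _ (- i - h.choose) e h.choose_spec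
    have e1 : - i - h.choose + i = - h.choose := by ring
    have e2 : - i - h.choose + h.choose = - i := by ring
    rwa [e1, e2] at h1
  have fother : ∀ x, P.rank x ≠ 0 → P.rank x ≠ 1 → f x = x := by
    intro x h0 h1
    simp only [f]
    rw [dif_neg, dif_neg]
    · rintro ⟨j, rfl⟩
      rw [rk] at h1
      omega
    · rintro ⟨j, rfl⟩
      rw [rk] at h0
      omega
  have fb : f P.bot = P.bot := fother _ (by omega) (by omega)
  have ft : f P.top = P.top := fother _ (by omega) (by omega)
  have hinv : ∀ x, f (f x) = x := by
    intro x
    by_cases h1 : x = P.bot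
    · rw [h1, fb, fb]
    by_cases h2 : x = P.top
    · rw [h2, ft, ft]
    rcases cover x (lt_of_le_of_ne (P.bot_le x) (Ne.symm h1)) (lt_of_le_of_ne (P.le_top x) h2)
      with ⟨i, rfl⟩ | ⟨i, rfl⟩
    · rw [fv, fv]; congr 2; ring
    · rw [fe, fe]; congr 2; ring
  have hmono : Monotone f := by
    intro a b hab
    rcases eq_or_lt_of_le hab with rfl | hlt
    · exact le_rfl
    by_cases ha : a = P.bot
    · rw [ha, fb]; exact P.bot_le _
    by_cases hb : b = P.top
    · rw [hb, ft]; exact P.le_top _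
    have r1 := P.rank_strictMono _ _ hlt
    have h2 := lt_of_le_of_ne (P.bot_le a) (Ne.symm ha)
    have h3 := lt_of_le_of_ne (P.le_top b) hb
    rcases cover a h2 (hlt.trans h3) with ⟨i, rfl⟩ | ⟨i, rfl⟩
    · rcases cover b (h2.trans hlt) h3 with ⟨j, rfl⟩ | ⟨j, rfl⟩
      · rw [rk, rk] at r1; omega
      · rw [fv, fe]
        have h4 := lts i j (-j) v e hlt
        simp only [neg_add_cancel, z0] at h4
        rcases ends _ (P.lt_of_rank (P.bot_le _) (by rw [rk]; omega)) h4 with h5 | h5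
        · have h6 := shift (-j + i) 0 (1 - i) v (by rw [h5, z0])
          have e1 : 1 - i + (-j + i) = -j + 1 := by ring
          rw [e1, add_zero] at h6
          rw [← h6, add, z1, sv]
          exact (s ^ (-j)).monotone hy2.le
        · have h6 := shift (-j + i) 1 (-i) v (by rw [h5, z1, sv])
          have e1 : -i + (-j + i) = -j := by ring
          have e2 : -i + 1 = 1 - i := by ring
          rw [e1, e2] at h6
          rw [← h6]
          exact (s ^ (-j)).monotone hve.le
    · have h4 := P.rank_strictMono _ _ h3
      rw [rk] at r1
      omega
  refine hadj Φ Ψ hΨ (P.sameOrbit_of_replace hv hm (P.involIso f hinv hmono) ?_ ?_)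
  · have := fv 0
    rw [z0] at this
    change f v = y
    rw [this, sub_zero, z1, sv]
  · intro z hz hzv
    change f z = z
    by_cases h1 : P.rank z = 1
    · have : z = e := P.flag_eq hz he (by omega)
      subst this
      have := fe 0
      rwa [z0, neg_zero, z0] at this
    · refine fother z (fun h => hzv (P.flag_eq hz hv (by omega))) h1

section main

variable {n : ℕ}

/-- Facets above `x` are connected through ridges above `x`. -/
theorem facet_conn (P : AbstractPolytope (n + 1)) (S : P.Face → P.Face → Prop)
    (hrefl : ∀ G, S G G) (htrans : ∀ G H K, S G H → S H K → S G K) (d : ℕ) :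
    ∀ x : P.Face, P.rank x = (n : ℤ) - d →
    (∀ R G G' : P.Face, P.rank R = (n : ℤ) - 1 → P.rank G = n → P.rank G' = n →
      x ≤ R → R ≤ G → R ≤ G' → S G G') →
    ∀ G G' : P.Face, P.rank G = n → P.rank G' = n → x ≤ G → x ≤ G' → S G G' := by
  induction d using Nat.strong_induction_on with
  | _ d ih =>
    intro x hx hS G G' hG hG' hxG hxG'
    have rt := P.rank_top
    push_cast at rt
    rcases Nat.lt_or_ge d 2 with hd | hd
    · interval_cases d
      · have h1 := P.eq_of_le_of_rank hxG (by omega)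
        have h2 := P.eq_of_le_of_rank hxG' (by omega)
        subst h1; subst h2; exact hrefl _
      · exact hS x G G' (by simpa using hx) hG hG' le_rfl hxG hxG'
    · have lt1 : x < G := P.lt_of_rank hxG (by omega)
      have lt2 : x < G' := P.lt_of_rank hxG' (by omega)
      have lt3 : G < P.top := P.lt_of_rank (P.le_top _) (by omega)
      have lt4 : G' < P.top := P.lt_of_rank (P.le_top _) (by omega)
      have path := P.strongly_connected x P.top (lt1.trans lt3) (by omega) G G' lt1 lt3 lt2 lt4
      have key : ∀ H, Relation.ReflTransGen (fun A B : P.Face =>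
          x < A ∧ A < P.top ∧ x < B ∧ B < P.top ∧ (A ≤ B ∨ B ≤ A)) G H →
          ∀ G'' : P.Face, P.rank G'' = n → H ≤ G'' → S G G'' := by
        intro H hH
        induction hH with
        | refl =>
          intro G'' h1 h2
          have := P.eq_of_le_of_rank h2 (by omega)
          subst this; exact hrefl _
        | tail _ hstep IH =>
          rename_i A B _
          obtain ⟨hA1, hA2, hB1, hB2, hcomp⟩ := hstep
          intro G'' h1 h2
          rcases hcomp with h | h
          · exact IH G'' h1 (h.trans h2)
          · have rA := P.rank_strictMono _ _ hA2
            have rB := P.rank_strictMono _ _ hB2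
            have rB' := P.rank_strictMono _ _ hB1
            obtain ⟨G3, g1, -, g3⟩ := P.exists_between (P.le_top A) n (by omega) (by omega)
            refine htrans _ _ _ (IH G3 g3 g1) ?_
            refine ih (n - P.rank B).toNat (by omega) B (by omega) ?_ G3 G'' g3 h1
              (h.trans g1) h2
            intro R X X' a1 a2 a3 a4 a5 a6
            exact hS R X X' a1 a2 a3 (hB1.le.trans a4) a5 a6
      exact key G' path G' hG' le_rfl

/-- `ε` identifies `K` with the faces of `P` below `G`. -/
def Sec {N : ℕ} (K : AbstractPolytope n) (P : AbstractPolytope N) (ε : K.Face → P.Face)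
    (G : P.Face) : Prop :=
  (∀ a b, ε a ≤ ε b ↔ a ≤ b) ∧ (∀ x, x ≤ G ↔ ∃ k, ε k = x) ∧ ∀ k, P.rank (ε k) = K.rank k

theorem sec_of_isSection {N : ℕ} {K : AbstractPolytope n} {P : AbstractPolytope N} {G : P.Face}
    (h : P.IsSection K P.bot G) : ∃ ε, Sec K P ε G := by
  obtain ⟨-, e, he⟩ := h
  refine ⟨fun k => (e k : P.Face), ?_, ?_, ?_⟩
  · intro a b
    exact e.le_iff_le
  · intro x
    constructor
    · intro hx
      refine ⟨e.symm ⟨x, P.bot_le x, hx⟩, ?_⟩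
      simp
    · rintro ⟨k, rfl⟩
      exact (e k).2.2
  · intro k
    have := he k
    rw [P.rank_bot] at this
    simpa using this

theorem Sec.map {N : ℕ} {K : AbstractPolytope n} {P : AbstractPolytope N} {G : P.Face}
    {ε : K.Face → P.Face} (h : Sec K P ε G) (γ : P.Face ≃o P.Face) :
    Sec K P (fun k => γ (ε k)) (γ G) := by
  obtain ⟨h1, h2, h3⟩ := h
  refine ⟨?_, ?_, ?_⟩
  · intro a b
    rw [γ.le_iff_le, h1]
  · intro x
    have : x ≤ γ G ↔ γ.symm x ≤ G := by rw [γ.symm_apply_le]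
    rw [this, h2]
    constructor
    · rintro ⟨k, hk⟩; exact ⟨k, by simp [hk]⟩
    · rintro ⟨k, hk⟩; exact ⟨k, by rw [← hk]; simp⟩
  · intro k
    rw [P.rank_aut, h3]

theorem Sec.inj {N : ℕ} {K : AbstractPolytope n} {P : AbstractPolytope N} {G : P.Face}
    {ε : K.Face → P.Face} (h : Sec K P ε G) : Function.Injective ε := by
  intro a b hab
  exact le_antisymm ((h.1 a b).1 hab.le) ((h.1 b a).1 hab.ge)

/-- Pull back a flag to a section. -/
def Sec.flag {N : ℕ} {K : AbstractPolytope n} {P : AbstractPolytope N} {G : P.Face}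
    {ε : K.Face → P.Face} (h : Sec K P ε G) (Φ : Flag P.Face) (hG : G ∈ Φ) : Flag K.Face where
  carrier := {k | ε k ∈ Φ}
  Chain' := by
    intro a ha b hb _
    rcases Φ.le_or_le ha hb with h' | h'
    · exact Or.inl ((h.1 _ _).1 h')
    · exact Or.inr ((h.1 _ _).1 h')
  max_chain' := by
    intro t ht hst
    refine Set.Subset.antisymm hst ?_
    intro k hk
    refine Flag.mem_iff_forall_le_or_ge.2 ?_
    intro z hz
    rcases Φ.le_or_le hz hG with h' | h'
    · obtain ⟨k', rfl⟩ := (h.2.1 z).1 h'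
      have hk' : k' ∈ t := hst hz
      rcases ht.total hk hk' with h4 | h4
      · exact Or.inl ((h.1 _ _).2 h4)
      · exact Or.inr ((h.1 _ _).2 h4)
    · exact Or.inl (((h.2.1 _).2 ⟨k, rfl⟩).trans h')

/-- For a regular section, any flag may be moved to any other. -/
theorem Sec.exists_map {N : ℕ} {K : AbstractPolytope n} {P : AbstractPolytope N} {G : P.Face}
    {ε : K.Face → P.Face} (h : Sec K P ε G) (hreg : K.IsRegular) (Φ Ψ : Flag P.Face)
    (hG : G ∈ Φ) (hG' : G ∈ Ψ) :
    ∃ θ : P.Face → P.Face, (∀ x, x ≤ G → θ x ≤ G) ∧ (∀ x y, x ≤ y → y ≤ G → θ x ≤ θ y) ∧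
      (∀ x y, x ≤ G → y ≤ G → θ x = θ y → x = y) ∧
      (∀ x ∈ Φ, ∀ y ∈ Ψ, x ≤ G → P.rank x = P.rank y → θ x = y) := by
  obtain ⟨g, hg⟩ := hreg (h.flag Φ hG) (h.flag Ψ hG')
  have hθ : ∀ k, Function.extend ε (fun k => ε (g k)) id (ε k) = ε (g k) := fun k =>
    h.inj.extend_apply _ _ k
  refine ⟨Function.extend ε (fun k => ε (g k)) id, ?_, ?_, ?_, ?_⟩
  · intro x hx
    obtain ⟨k, rfl⟩ := (h.2.1 x).1 hx
    rw [hθ]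
    exact (h.2.1 _).2 ⟨_, rfl⟩
  · intro x y hxy hy
    obtain ⟨k, rfl⟩ := (h.2.1 x).1 (hxy.trans hy)
    obtain ⟨l, rfl⟩ := (h.2.1 y).1 hy
    rw [hθ, hθ, h.1, g.le_iff_le]
    exact (h.1 _ _).1 hxy
  · intro x y hx hy hxy
    obtain ⟨k, rfl⟩ := (h.2.1 x).1 hx
    obtain ⟨l, rfl⟩ := (h.2.1 y).1 hy
    rw [hθ, hθ] at hxy
    rw [g.injective (h.inj hxy)]
  · intro x hx y hy hxG hr
    obtain ⟨k, rfl⟩ := (h.2.1 x).1 hxG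
    rw [hθ]
    have hk : k ∈ (h.flag Φ hG : Set K.Face) := hx
    have h1 : g k ∈ (h.flag Ψ hG' : Set K.Face) := hg ▸ Set.mem_image_of_mem g hk
    have h2 : ε (g k) ∈ Ψ := h1
    exact P.flag_eq h2 hy (by rw [h.2.2, K.rank_aut, ← h.2.2, hr])

/-- In a flat facet, every edge lies on every ridge. -/
theorem Sec.flat {N : ℕ} {K : AbstractPolytope n} {P : AbstractPolytope N} {G : P.Face}
    {ε : K.Face → P.Face} (h : Sec K P ε G) (hn : 2 ≤ n)
    (hflat : K.IsKMFlat 1 ((n : ℤ) - 1)) {e R : P.Face} (he : e ≤ G) (her : P.rank e = 1)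
    (hR : R ≤ G) (hRr : P.rank R = (n : ℤ) - 1) : e ≤ R := by
  obtain ⟨k, rfl⟩ := (h.2.1 e).1 he
  obtain ⟨l, rfl⟩ := (h.2.1 R).1 hR
  rw [h.2.2] at her hRr
  rcases hflat k l her hRr with h' | h'
  · exact (h.1 _ _).2 h'
  · have := K.eq_of_le_of_rank h' (by omega)
    subst this
    exact le_rfl

/-- The reflection of a facet `G` in the edge `e`. -/
theorem exists_reflection {K : AbstractPolytope n} {P : AbstractPolytope (n + 1)} {G : P.Face}
    {ε : K.Face → P.Face} (h : Sec K P ε G) (hreg : K.IsRegular)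
    {v y e : P.Face} (hv : P.rank v = 0) (her : P.rank e = 1)
    (hve : v < e) (hy1 : P.bot < y) (hye : y < e) (hyv : y ≠ v) (heG : e ≤ G) :
    ∃ θ : P.Face → P.Face, (∀ x, x ≤ G → θ x ≤ G) ∧ (∀ x y, x ≤ y → y ≤ G → θ x ≤ θ y) ∧
      (∀ x, x ≤ G → θ (θ x) = x) ∧ θ v = y ∧ θ y = v ∧ (∀ x, e ≤ x → x ≤ G → θ x = x) ∧
      θ P.bot = P.bot := by
  have rb := P.rank_bot
  have hyr : P.rank y = 0 := by
    have h1 := P.rank_strictMono _ _ hy1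
    have h2 := P.rank_strictMono _ _ hye
    omega
  obtain ⟨Φ, hvΦ, heΦ, hGΦ⟩ := P.exists_flag3 hve.le heG
  obtain ⟨Ψ, -, hm⟩ := P.exists_adj Φ (P.bot_mem Φ) hvΦ heΦ (by omega) (by omega) hyv hy1 hye
  have hGv : G ≠ v := by rintro rfl; exact absurd hve (not_lt_of_ge heG)
  obtain ⟨θ, t1, t2, t3, t4⟩ := h.exists_map hreg Φ Ψ hGΦ ((hm G).2 (Or.inr ⟨hGΦ, hGv⟩))
  have hfix : ∀ x ∈ Φ, x ≤ G → x ≠ v → θ x = x := fun x hx hxG hxv =>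
    t4 x hx x ((hm x).2 (Or.inr ⟨hx, hxv⟩)) hxG rfl
  have tv : θ v = y := t4 v hvΦ y ((hm y).2 (Or.inl rfl)) (hve.le.trans heG) (by omega)
  have hv1 : P.bot < v := P.lt_of_rank (P.bot_le v) (by omega)
  have tb : θ P.bot = P.bot := hfix _ (P.bot_mem Φ) (P.bot_le G) hv1.ne
  have te : θ e = e := hfix e heΦ heG hve.ne'
  have ty : θ y = v := by
    have hyG := hye.le.trans heG
    have a1 : θ y ≤ e := by
      have := t2 y e hye.le heG
      rwa [te] at this
    refine (P.diamond_unique (a := P.bot) (b := e) (x := y) (by omega) ⟨hy1, hye⟩ ⟨hv1, hve⟩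
      ⟨lt_of_le_of_ne (P.bot_le _) ?_, lt_of_le_of_ne a1 ?_⟩ hyv ?_).symm
    · intro h'
      exact hy1.ne (t3 _ _ (P.bot_le G) hyG (tb.trans h'))
    · intro h'
      exact hye.ne (t3 _ _ hyG heG (h'.trans te.symm))
    · intro h'
      exact hyv.symm (t3 _ _ (hve.le.trans heG) hyG (tv.trans h'))
  refine ⟨θ, t1, t2, ?_, tv, ty, ?_, tb⟩
  · intro x hx
    refine P.rigid' P.bot G (fun x => θ (θ x)) (P.bot_le G) ?_ ?_ Φ (P.bot_mem Φ) hGΦ ?_ x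
      (P.bot_le x) hx
    · intro a ha b hb hab
      exact t2 _ _ (t2 _ _ hab hb.2) (t1 _ hb.2)
    · intro a ha b hb hab
      exact t3 _ _ ha.2 hb.2 (t3 _ _ (t1 _ ha.2) (t1 _ hb.2) hab)
    · intro z hz _ hzG
      by_cases hzv : z = v
      · subst hzv
        simp only [tv, ty]
      · simp only [hfix z hz hzG hzv]
  · refine P.rigid' e G θ heG ?_ ?_ Φ heΦ hGΦ ?_
    · intro a ha b hb hab
      exact t2 _ _ hab hb.2
    · intro a ha b hb hab
      exact t3 _ _ ha.2 hb.2 hab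
    · intro z hz hze hzG
      refine hfix z hz hzG ?_
      rintro rfl
      exact absurd hve (not_lt_of_ge hze)

theorem main_large (hn : 2 ≤ n) (K : AbstractPolytope n) (hreg : K.IsRegular)
    (hflat : K.IsKMFlat 1 ((n : ℤ) - 1))
    (P : AbstractPolytope (n + 1)) (hchiral : P.IsChiral)
    (F : P.Face) (hF : P.rank F = n) (hsec : P.IsSection K P.bot F) : False := by
  have htwo := P.chiral_two hchiral
  have hadj := hchiral.2
  have rb := P.rank_bot
  have rt := P.rank_top
  push_cast at rt
  obtain ⟨ε, hε⟩ := sec_of_isSection hsec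
  obtain ⟨Φ, hFΦ, -, -⟩ := P.exists_flag3 (le_refl F) (le_refl F)
  obtain ⟨v, hv, hvr⟩ := P.flag_ranks Φ 0 (by norm_num) (by push_cast; omega)
  obtain ⟨e, he, her⟩ := P.flag_ranks Φ 1 (by norm_num) (by push_cast; omega)
  have hv1 : P.bot < v := P.lt_of_rank (P.bot_le v) (by omega)
  have hve : v < e := P.flag_lt hv he (by omega)
  have heF : e ≤ F := P.flag_le he hFΦ (by omega)
  obtain ⟨y, hy, hy1, hy2⟩ := P.diamond_other (by omega) ⟨hv1, hve⟩
  obtain ⟨Ψ, hΨ, hm⟩ := P.exists_adj Φ (P.bot_mem Φ) hv he (by omega) (by omega)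
    hy hy1 hy2
  have hFv : F ≠ v := by rintro rfl; omega
  have hFΨ : F ∈ Ψ := (hm F).2 (Or.inr ⟨hFΦ, hFv⟩)
  -- all facets are copies of `K`
  have hsecs : ∀ G : P.Face, P.rank G = n → ∃ ε, Sec K P ε G := by
    intro G hG
    obtain ⟨Χ, hGΧ, -, -⟩ := P.exists_flag3 (le_refl G) (le_refl G)
    have : ∃ γ : P.Face ≃o P.Face, γ F = G := by
      rcases htwo Φ Ψ Χ with h | ⟨γ, h⟩ | ⟨γ, h⟩
      · exact absurd h (hadj _ _ hΨ)
      · exact ⟨γ, P.map_flag_elem h hFΦ hGΧ (by omega)⟩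
      · exact ⟨γ, P.map_flag_elem h hFΨ hGΧ (by omega)⟩
    obtain ⟨γ, rfl⟩ := this
    exact ⟨_, hε.map γ⟩
  have hridge : ∀ G R : P.Face, P.rank G = n → P.rank R = (n : ℤ) - 1 → R ≤ G → e ≤ G → e ≤ R := by
    intro G R hG hR hRG heG
    obtain ⟨ε', h'⟩ := hsecs G hG
    exact h'.flat hn hflat heG her hRG hR
  have hall : ∀ G : P.Face, P.rank G = n → e ≤ G := by
    intro G hG
    refine (P.facet_conn (fun A B => e ≤ A → e ≤ B) (fun _ h => h)
      (fun _ _ _ h1 h2 h => h2 (h1 h)) (n + 1) P.bot (by push_cast; omega) ?_ F G hF hG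
      (P.bot_le _) (P.bot_le _)) heF
    intro R X X' hR hX hX' _ h1 h2 h3
    exact (hridge X R hX hR h1 h3).trans h2
  have hθ : ∀ G : P.Face, ∃ θ : P.Face → P.Face, P.rank G = n →
      (∀ x, x ≤ G → θ x ≤ G) ∧ (∀ x y, x ≤ y → y ≤ G → θ x ≤ θ y) ∧
      (∀ x, x ≤ G → θ (θ x) = x) ∧ θ v = y ∧ θ y = v ∧ (∀ x, e ≤ x → x ≤ G → θ x = x) ∧
      θ P.bot = P.bot := by
    intro G
    by_cases hG : P.rank G = n
    · obtain ⟨ε', h'⟩ := hsecs G hG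
      obtain ⟨θ, h⟩ := exists_reflection h' hreg hvr her hve hy1 hy2 hy (hall G hG)
      exact ⟨θ, fun _ => h⟩
    · exact ⟨id, fun h => absurd h hG⟩
  choose θ hθ using hθ
  -- agreement on ridges
  have hagreeR : ∀ R G G' : P.Face, P.rank R = (n : ℤ) - 1 → P.rank G = n → P.rank G' = n →
      R ≤ G → R ≤ G' → ∀ x, x ≤ R → θ G x = θ G' x := by
    intro R G G' hR hG hG' hRG hRG' x hx
    obtain ⟨a1, a2, a3, a4, a5, a6, a7⟩ := hθ G hG
    obtain ⟨b1, b2, b3, b4, b5, b6, b7⟩ := hθ G' hG'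
    have heR : e ≤ R := hridge G R hG hR hRG (hall G hG)
    have aR : θ G R = R := a6 R heR hRG
    have bR : θ G' R = R := b6 R heR hRG'
    have am : ∀ z, z ≤ R → θ G z ≤ R := fun z hz => by
      have := a2 z R hz hRG
      rwa [aR] at this
    have bm : ∀ z, z ≤ R → θ G' z ≤ R := fun z hz => by
      have := b2 z R hz hRG'
      rwa [bR] at this
    obtain ⟨Χ, c1, c2, c3⟩ := P.exists_flag3 hve.le heR
    have key := P.rigid' P.bot R (fun z => θ G (θ G' z)) (P.bot_le R) (by
        intro p hp q hq hpq
        exact a2 _ _ (b2 _ _ hpq (hq.2.trans hRG')) ((bm q hq.2).trans hRG)) (by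
        intro p hp q hq hpq
        have h1 := congrArg (θ G) hpq
        simp only at h1
        rw [a3 _ ((bm p hp.2).trans hRG), a3 _ ((bm q hq.2).trans hRG)] at h1
        have h2 := congrArg (θ G') h1
        rwa [b3 _ (hp.2.trans hRG'), b3 _ (hq.2.trans hRG')] at h2) Χ (P.bot_mem Χ) c3 (by
        intro z hz _ hzR
        change θ G (θ G' z) = z
        rcases lt_or_ge (P.rank z) 1 with h | h
        · have hzr := P.rank_ge z
          rcases eq_or_ne (P.rank z) 0 with h0 | h0
          · have : z = v := P.flag_eq hz c1 (by omega)
            rw [this, b4, a5]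
          · have : z = P.bot := P.eq_bot_of_rank (by omega)
            rw [this, b7, a7]
        · have hez : e ≤ z := P.flag_le c2 hz (by omega)
          rw [b6 z hez (hzR.trans hRG'), a6 z hez (hzR.trans hRG)]) x (P.bot_le x) hx
    have h1 := congrArg (θ G) key
    rw [a3 _ ((bm x hx).trans hRG)] at h1
    exact h1.symm
  have hagree : ∀ x G G' : P.Face, P.rank G = n → P.rank G' = n → x ≤ G → x ≤ G' →
      θ G x = θ G' x := by
    intro x G G' hG hG' hxG hxG'
    have rx := P.rank_mono hxG
    refine P.facet_conn (fun A B => θ A x = θ B x) (fun _ => rfl)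
      (fun _ _ _ h1 h2 => h1.trans h2) (n - P.rank x).toNat x (by omega) ?_ G G' hG hG' hxG hxG'
    intro R X X' hR hX hX' h1 h2 h3
    exact hagreeR R X X' hR hX hX' h2 h3 x h1
  -- the global reflection
  have hfac : ∀ x : P.Face, ∃ G : P.Face, x ≠ P.top → P.rank G = n ∧ x ≤ G := by
    intro x
    by_cases hx : x = P.top
    · exact ⟨x, fun h => absurd hx h⟩
    · have := P.rank_strictMono _ _ (lt_of_le_of_ne (P.le_top x) hx)
      obtain ⟨G, h1, -, h3⟩ := P.exists_between (P.le_top x) n (by omega) (by omega)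
      exact ⟨G, fun _ => ⟨h3, h1⟩⟩
  choose fac hfac using hfac
  let f : P.Face → P.Face := fun x => if x = P.top then P.top else θ (fac x) x
  have ft : f P.top = P.top := if_pos rfl
  have netop : ∀ x G : P.Face, P.rank G = n → x ≤ G → x ≠ P.top := by
    rintro x G hG hx rfl
    have := P.rank_mono hx
    omega
  have fG : ∀ x G : P.Face, P.rank G = n → x ≤ G → f x = θ G x := by
    intro x G hG hx
    have hne := netop x G hG hx
    have : f x = θ (fac x) x := if_neg hne
    rw [this]
    exact hagree x _ _ (hfac x hne).1 hG (hfac x hne).2 hx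
  have hinv : ∀ x, f (f x) = x := by
    intro x
    by_cases hx : x = P.top
    · rw [hx, ft, ft]
    · obtain ⟨h1, h2⟩ := hfac x hx
      obtain ⟨a1, -, a3, -⟩ := hθ _ h1
      rw [fG x _ h1 h2, fG _ _ h1 (a1 x h2), a3 x h2]
  have hmono : Monotone f := by
    intro a b hab
    by_cases hb : b = P.top
    · rw [hb, ft]; exact P.le_top _
    · obtain ⟨h1, h2⟩ := hfac b hb
      obtain ⟨-, a2, -⟩ := hθ _ h1
      rw [fG b _ h1 h2, fG a _ h1 (hab.trans h2)]
      exact a2 _ _ hab h2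
  obtain ⟨-, -, -, a4, -, a6, a7⟩ := hθ F hF
  refine hadj Φ Ψ hΨ (P.sameOrbit_of_replace hv hm (P.involIso f hinv hmono) ?_ ?_)
  · change f v = y
    rw [fG v F hF (hve.le.trans heF), a4]
  · intro z hz hzv
    change f z = z
    by_cases hzt : z = P.top
    · rw [hzt, ft]
    · have hlt := P.rank_strictMono _ _ (lt_of_le_of_ne (P.le_top z) hzt)
      have hzF : z ≤ F := P.flag_le hz hFΦ (by omega)
      rw [fG z F hF hzF]
      rcases lt_or_ge (P.rank z) 1 with h | h
      · have hzr := P.rank_ge z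
        have h0 : P.rank z ≠ 0 := fun h0 => hzv (P.flag_eq hz hv (by omega))
        have : z = P.bot := P.eq_bot_of_rank (by omega)
        rw [this, a7]
      · exact a6 z (P.flag_le he hz (by omega)) hzF

end main

end AbstractPolytope

/-- If `K` is a regular `n`-polytope that is `(1, n-1)`-flat, then
no finite chiral `(n+1)`-polytope has a facet isomorphic to `K`. -/
theorem no_chiral_with_one_flat_regular_facet
    (n : ℕ) (K : AbstractPolytope n) (hreg : K.IsRegular)
    (hflat : K.IsKMFlat 1 ((n : ℤ) - 1))
    (P : AbstractPolytope (n + 1)) (hfin : Finite P.Face) (hchiral : P.IsChiral)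
    (F : P.Face) (hF : P.IsFacet F) :
    ¬ P.IsSection K P.bot F := by
  intro hsec
  rcases Nat.lt_or_ge n 2 with hn | hn
  · interval_cases n
    · exact P.not_chiral_one hchiral
    · exact P.not_chiral_two hchiral
  · refine AbstractPolytope.main_large hn K hreg hflat P hchiral F ?_ hsec
    have h : P.rank F = ((n + 1 : ℕ) : ℤ) - 1 := hF
    push_cast at h
    omega
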